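/- Let n ≥ 2, m > 1 and δ > 1/2. There exists a constant C > 0 such that for all λ ∈ ℝ, all η > 0, either sign ±, and every Schwartz function f on ℝⁿ, | Im ( |p′(D_x)| (λ ± iη − p(D_x))^{-1} f , f )_{L²(ℝⁿ)} | ≤ C ‖ ⟨x⟩^{δ} f ‖²_{L²(ℝⁿ)}, with C independent of λ, η and f. -/

import Mathlib

open MeasureTheory Real Complex RealInnerProductSpace

noncomputable section

/-- Fourier transform with convention `(2π)^(-n/2) ∫ e^(-ix·ξ) f(x) dx`. -/
def FT (n : ℕ) (f : EuclideanSpace ℝ (Fin n) → ℂ) (ξ : EuclideanSpace ℝ (Fin n)) : ℂ :=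
  ((2 * π) ^ (-(n : ℝ) / 2) : ℝ) •
    ∫ x : EuclideanSpace ℝ (Fin n), Complex.exp (-Complex.I * ((⟪x, ξ⟫ : ℝ) : ℂ)) * f x

/-- Inverse Fourier transform. -/
def IFT (n : ℕ) (F : EuclideanSpace ℝ (Fin n) → ℂ) (x : EuclideanSpace ℝ (Fin n)) : ℂ :=
  ((2 * π) ^ (-(n : ℝ) / 2) : ℝ) •
    ∫ ξ : EuclideanSpace ℝ (Fin n), Complex.exp (Complex.I * ((⟪x, ξ⟫ : ℝ) : ℂ)) * F ξ

/-- Fourier multiplier with symbol `q`: `q(D_x) f = IFT (q · FT f)`. -/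
def mult (n : ℕ) (q : EuclideanSpace ℝ (Fin n) → ℂ) (f : EuclideanSpace ℝ (Fin n) → ℂ) :
    EuclideanSpace ℝ (Fin n) → ℂ :=
  IFT n fun ξ => q ξ * FT n f ξ

theorem lintegral_poisson_deriv_le {S : Set ℝ} (hS : Convex ℝ S) (hSm : MeasurableSet S)
    {g g' : ℝ → ℝ} (hg : ∀ t ∈ S, HasDerivAt g (g' t) t) (hpos : ∀ t ∈ S, 0 < g' t)
    (lam : ℝ) {η : ℝ} (hη : 0 < η) :
    ∫⁻ t in S, ENNReal.ofReal (η * g' t / ((lam - g t) ^ 2 + η ^ 2)) ≤ ENNReal.ofReal π := by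
  set h : ℝ → ℝ := fun t => Real.arctan ((g t - lam) / η) with hh
  have hd : ∀ t ∈ S, HasDerivAt h (η * g' t / ((lam - g t) ^ 2 + η ^ 2)) t := by
    intro t ht
    convert (((hg t ht).sub_const lam).div_const η).arctan using 1
    field_simp
    ring
  have hp : ∀ t ∈ S, 0 < η * g' t / ((lam - g t) ^ 2 + η ^ 2) := fun t ht => by
    have := hpos t ht
    positivity
  have hinj : Set.InjOn h S := by
    refine (strictMonoOn_of_deriv_pos hS
      (fun t ht => (hd t ht).continuousAt.continuousWithinAt) fun t ht => ?_).injOn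
    rw [(hd t (interior_subset ht)).deriv]
    exact hp t (interior_subset ht)
  have key := lintegral_image_eq_lintegral_abs_deriv_mul hSm
    (fun t ht => (hd t ht).hasDerivWithinAt) hinj (fun _ => 1)
  simp only [mul_one, lintegral_const, Measure.restrict_apply MeasurableSet.univ, Set.univ_inter,
    one_mul] at key
  calc _ = ∫⁻ t in S, ENNReal.ofReal |η * g' t / ((lam - g t) ^ 2 + η ^ 2)| :=
        setLIntegral_congr_fun hSm fun t ht => by simp only [abs_of_pos (hp t ht)]
    _ = volume (h '' S) := key.symm
    _ ≤ volume (Set.Ioo (-(π / 2)) (π / 2)) := by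
        apply measure_mono
        rintro _ ⟨t, -, rfl⟩
        exact Real.arctan_mem_Ioo _
    _ = ENNReal.ofReal π := by rw [Real.volume_Ioo]; ring_nf

theorem sq_lintegral_le_japanese {δ : ℝ} {u : ℝ → ENNReal} (hu : Measurable u) :
    (∫⁻ s, u s) ^ 2 ≤ (∫⁻ s : ℝ, ENNReal.ofReal ((1 + ‖s‖ ^ 2) ^ (-(2 * δ) / 2))) *
      ∫⁻ s, ENNReal.ofReal ((1 + ‖s‖ ^ 2) ^ δ) * u s ^ 2 := by
  have hA : Measurable fun s : ℝ => ENNReal.ofReal ((1 + ‖s‖ ^ 2) ^ (-δ / 2)) := by fun_prop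
  have hB : Measurable fun s : ℝ => ENNReal.ofReal ((1 + ‖s‖ ^ 2) ^ (δ / 2)) * u s := by fun_prop
  have h := ENNReal.lintegral_mul_le_Lp_mul_Lq volume Real.HolderConjugate.two_two
    hA.aemeasurable hB.aemeasurable
  have h1 : ∀ s : ℝ, ((fun s : ℝ => ENNReal.ofReal ((1 + ‖s‖ ^ 2) ^ (-δ / 2))) *
      fun s : ℝ => ENNReal.ofReal ((1 + ‖s‖ ^ 2) ^ (δ / 2)) * u s) s = u s := by
    intro s
    have hp : (0:ℝ) < 1 + ‖s‖ ^ 2 := by positivity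
    simp only [Pi.mul_apply]
    rw [← mul_assoc, ← ENNReal.ofReal_mul (by positivity), ← Real.rpow_add hp]
    simp [show -δ / 2 + δ / 2 = 0 by ring]
  have hsq : ∀ (r : ℝ) (s : ℝ), ENNReal.ofReal ((1 + ‖s‖ ^ 2) ^ r) ^ 2 =
      ENNReal.ofReal ((1 + ‖s‖ ^ 2) ^ (r * 2)) := by
    intro r s
    rw [← ENNReal.ofReal_pow (by positivity), Real.rpow_mul (by positivity)]
    norm_num
  simp_rw [h1] at h
  refine (pow_le_pow_left' h 2).trans_eq ?_
  rw [mul_pow, ← ENNReal.rpow_two, ← ENNReal.rpow_two, ← ENNReal.rpow_mul, ← ENNReal.rpow_mul]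
  simp only [ENNReal.rpow_two, mul_pow, hsq]
  norm_num
  ring_nf

theorem norm_cexp_neg_I_mul_ofReal (r : ℝ) : ‖cexp (-I * (r : ℂ))‖ = 1 := by
  rw [neg_mul_comm, ← Complex.ofReal_neg, Complex.norm_exp_I_mul_ofReal]

section Homogeneous

variable {E : Type*} [NormedAddCommGroup E] [InnerProductSpace ℝ E]

theorem fderiv_smul_of_homogeneous {a : E → ℝ} (ha_hom : ∀ t : ℝ, 0 < t → ∀ ξ, a (t • ξ) = t * a ξ)
    {t : ℝ} (ht : 0 < t) {ξ : E} (hd : DifferentiableAt ℝ a ξ) :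
    fderiv ℝ a (t • ξ) = fderiv ℝ a ξ := by
  have h1 := fderiv_comp_smul (f := a) (x := ξ) t
  have h2 : (fun x => a (t • x)) = fun x => t • a x := funext (ha_hom t ht)
  rw [h2, fderiv_fun_const_smul hd] at h1
  exact (smul_right_injective _ ht.ne' h1).symm

theorem fderiv_apply_self_of_homogeneous {a : E → ℝ}
    (ha_hom : ∀ t : ℝ, 0 < t → ∀ ξ, a (t • ξ) = t * a ξ) {ξ : E} (hd : DifferentiableAt ℝ a ξ) :
    fderiv ℝ a ξ ξ = a ξ := by
  have h1 : HasDerivAt (fun t : ℝ => t • ξ) ξ 1 := by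
    simpa using (hasDerivAt_id (1 : ℝ)).smul_const ξ
  have h2 : HasDerivAt (fun t : ℝ => a (t • ξ)) (fderiv ℝ a ξ ξ) 1 := by
    refine HasFDerivAt.comp_hasDerivAt (l := a) 1 ?_ h1
    simpa using hd.hasFDerivAt
  have h3 : HasDerivAt (fun t : ℝ => a (t • ξ)) (a ξ) 1 := by
    have : HasDerivAt (fun t : ℝ => t * a ξ) (a ξ) 1 := by
      simpa using (hasDerivAt_id (1 : ℝ)).mul_const (a ξ)
    refine this.congr_of_eventuallyEq ?_
    filter_upwards [lt_mem_nhds (zero_lt_one' ℝ)] with t ht using ha_hom t ht ξ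
  exact h2.unique h3

theorem convex_circular_cone (ω : E) {c : ℝ} (hc : 0 ≤ c) :
    Convex ℝ {ξ : E | c * ‖ξ‖ < ⟪ω, ξ⟫} := by
  intro x hx y hy α β hα hβ hαβ
  simp only [Set.mem_ofPred_eq] at hx hy ⊢
  rw [inner_add_right, inner_smul_right, inner_smul_right]
  have h1 : ‖α • x + β • y‖ ≤ α * ‖x‖ + β * ‖y‖ := by
    refine (norm_add_le _ _).trans_eq ?_
    rw [norm_smul, norm_smul, Real.norm_of_nonneg hα, Real.norm_of_nonneg hβ]
  have h2 : c * ‖α • x + β • y‖ ≤ c * (α * ‖x‖ + β * ‖y‖) := by gcongr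
  rcases hα.eq_or_lt with rfl | hα
  · have : β = 1 := by linarith
    subst this
    linarith
  · nlinarith [mul_pos hα (sub_pos.2 hx), mul_nonneg hβ (sub_pos.2 hy).le]

/-- Near each direction `ω` the derivative of `a` along `ω` is bounded below on a circular cone. -/
theorem exists_circular_cone_fderiv_lower_bound {a : E → ℝ}
    (ha_smooth : ContDiffOn ℝ (⊤ : ℕ∞) a {(0 : E)}ᶜ)
    (ha_hom : ∀ t : ℝ, 0 < t → ∀ ξ, a (t • ξ) = t * a ξ)
    (ha_pos : ∀ ξ : E, ξ ≠ 0 → 0 < a ξ) {ω : E} (hω : ‖ω‖ = 1) :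
    ∃ c κ : ℝ, 0 ≤ c ∧ c < 1 ∧ 0 < κ ∧ ∀ ξ : E, c * ‖ξ‖ < ⟪ω, ξ⟫ → κ ≤ fderiv ℝ a ξ ω := by
  have hdiff : ∀ ξ : E, ξ ≠ 0 → DifferentiableAt ℝ a ξ := fun ξ hξ =>
    (ha_smooth.contDiffAt (isOpen_compl_singleton.mem_nhds hξ)).differentiableAt (by simp)
  have hω0 : ω ≠ 0 := by rintro rfl; simp at hω
  have hcont : ContinuousAt (fun ξ => fderiv ℝ a ξ ω) ω := by
    have := (ha_smooth.continuousOn_fderiv_of_isOpen isOpen_compl_singleton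
      (by simp)).continuousAt (isOpen_compl_singleton.mem_nhds hω0)
    exact this.clm_apply continuousAt_const
  have haω := ha_pos ω hω0
  have hev : ∀ᶠ ξ in nhds ω, a ω / 2 < fderiv ℝ a ξ ω := by
    refine hcont.eventually (lt_mem_nhds ?_)
    simp only
    rw [fderiv_apply_self_of_homogeneous ha_hom (hdiff ω hω0)]
    linarith
  obtain ⟨ρ, hρ, hball⟩ := Metric.eventually_nhds_iff.1 hev
  set r := min ρ 1
  have hr : 0 < r := lt_min hρ one_pos
  have hr1 : r ≤ 1 := min_le_right _ _
  refine ⟨1 - r ^ 2 / 2, a ω / 2, by nlinarith, by nlinarith, by linarith, fun ξ hξ => ?_⟩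
  have hξ0 : ξ ≠ 0 := by rintro rfl; simp at hξ
  have hn : 0 < ‖ξ‖ := norm_pos_iff.2 hξ0
  rw [← fderiv_smul_of_homogeneous ha_hom (inv_pos.2 hn) (hdiff ξ hξ0)]
  refine (hball ?_).le
  have hu : ‖‖ξ‖⁻¹ • ξ‖ = 1 := by rw [norm_smul, norm_inv, norm_norm, inv_mul_cancel₀ hn.ne']
  have hi : 1 - r ^ 2 / 2 < ⟪‖ξ‖⁻¹ • ξ, ω⟫ := by
    rw [inner_smul_left, real_inner_comm]
    simp only [conj_trivial]
    rw [inv_mul_eq_div, lt_div_iff₀ hn]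
    exact hξ
  rw [dist_eq_norm]
  refine lt_of_lt_of_le ?_ (min_le_left ρ 1)
  refine lt_of_pow_lt_pow_left₀ 2 hr.le ?_
  rw [norm_sub_sq_real, hu, hω]
  linarith

theorem exists_fderiv_bound_of_homogeneous [FiniteDimensional ℝ E] {a : E → ℝ}
    (ha_smooth : ContDiffOn ℝ (⊤ : ℕ∞) a {(0 : E)}ᶜ)
    (ha_hom : ∀ t : ℝ, 0 < t → ∀ ξ, a (t • ξ) = t * a ξ) :
    ∃ M : ℝ, 0 ≤ M ∧ ∀ ξ : E, ξ ≠ 0 → ‖fderiv ℝ a ξ‖ ≤ M := by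
  have hdiff : ∀ ξ : E, ξ ≠ 0 → DifferentiableAt ℝ a ξ := fun ξ hξ =>
    (ha_smooth.contDiffAt (isOpen_compl_singleton.mem_nhds hξ)).differentiableAt (by simp)
  have hcont : ContinuousOn (fderiv ℝ a) (Metric.sphere 0 1) :=
    (ha_smooth.continuousOn_fderiv_of_isOpen isOpen_compl_singleton (by simp)).mono fun ξ hξ => by
      rintro rfl; simp at hξ
  obtain ⟨M, hM⟩ := (isCompact_sphere (0 : E) 1).exists_bound_of_continuousOn hcont
  refine ⟨max M 0, le_max_right _ _, fun ξ hξ => ?_⟩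
  have hn : 0 < ‖ξ‖ := norm_pos_iff.2 hξ
  rw [← fderiv_smul_of_homogeneous ha_hom (inv_pos.2 hn) (hdiff ξ hξ)]
  refine (hM _ ?_).trans (le_max_left _ _)
  rw [mem_sphere_zero_iff_norm, norm_smul, norm_inv, norm_norm, inv_mul_cancel₀ hn.ne']

theorem exists_orthogonal_coordinates [FiniteDimensional ℝ E] {d : ℕ}
    (hd : Module.finrank ℝ E = d + 1) {ω : E} (hω : ‖ω‖ = 1) :
    ∃ L : (EuclideanSpace ℝ (Fin d) × ℝ) ≃L[ℝ] E,
      (∀ x v s t, ⟪L (x, s), L (v, t)⟫ = ⟪x, v⟫ + s * t) ∧ L (0, 1) = ω := by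
  have : Fact (Module.finrank ℝ E = d + 1) := ⟨hd⟩
  have hω0 : ω ≠ 0 := by rintro rfl; simp at hω
  let b := OrthonormalBasis.fromOrthogonalSpanSingleton (𝕜 := ℝ) d hω0
  let T : (EuclideanSpace ℝ (Fin d) × ℝ) →ₗ[ℝ] E :=
    ((ℝ ∙ ω)ᗮ.subtype ∘ₗ b.repr.symm.toLinearEquiv.toLinearMap).coprod
      (LinearMap.toSpanSingleton ℝ E ω)
  have hT : ∀ x s, T (x, s) = (b.repr.symm x : E) + s • ω := fun x s => by simp [T]
  have horth : ∀ x, ⟪(b.repr.symm x : E), ω⟫ = 0 := fun x =>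
    Submodule.mem_orthogonal_singleton_iff_inner_left.1 (b.repr.symm x).2
  have hinner : ∀ x v s t, ⟪T (x, s), T (v, t)⟫ = ⟪x, v⟫ + s * t := by
    intro x v s t
    rw [hT, hT, inner_add_left, inner_add_right, inner_add_right, inner_smul_left,
      inner_smul_right, inner_smul_left, inner_smul_right, horth, real_inner_comm _ ω, horth,
      real_inner_self_eq_norm_sq, hω, ← Submodule.coe_inner, LinearIsometryEquiv.inner_map_map]
    simp
  have hinj : Function.Injective T := by
    rw [injective_iff_map_eq_zero]
    rintro ⟨x, s⟩ h
    have h1 := hinner x x s s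
    rw [h, inner_zero_left, real_inner_self_eq_norm_sq] at h1
    have hx : ‖x‖ = 0 := by nlinarith [sq_nonneg ‖x‖, mul_self_nonneg s]
    have hs : s = 0 := by nlinarith [sq_nonneg ‖x‖, mul_self_nonneg s]
    simp [norm_eq_zero.1 hx, hs]
  refine ⟨(LinearMap.linearEquivOfInjective T hinj (by simp [hd])).toContinuousLinearEquiv,
    hinner, ?_⟩
  change T (0, 1) = ω
  simp [hT]

end Homogeneous

section Trace

variable {V E : Type*} [NormedAddCommGroup V] [InnerProductSpace ℝ V] [FiniteDimensional ℝ V]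
  [MeasurableSpace V] [BorelSpace V] [NormedAddCommGroup E] [InnerProductSpace ℝ E]
  [FiniteDimensional ℝ E] [MeasurableSpace E] [BorelSpace E]

theorem SchwartzMap.lintegral_enorm_sq_fourier_angular (φ : SchwartzMap V ℂ) :
    ∫⁻ v, ‖∫ x, cexp (-I * ((⟪x, v⟫ : ℝ) : ℂ)) * φ x‖ₑ ^ 2 =
      ENNReal.ofReal ((2 * π) ^ Module.finrank ℝ V) * ∫⁻ x, ‖φ x‖ₑ ^ 2 := by
  have h1 : ∀ v, ∫ x, cexp (-I * ((⟪x, v⟫ : ℝ) : ℂ)) * φ x =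
      FourierTransform.fourier φ ((2 * π)⁻¹ • v) := by
    intro v
    rw [SchwartzMap.fourier_coe, Real.fourier_eq']
    congr 1
    ext x
    rw [smul_eq_mul, inner_smul_right]
    congr 2
    push_cast
    have : (π : ℂ) ≠ 0 := by exact_mod_cast Real.pi_ne_zero
    field_simp
  have h2 : ∀ ψ : SchwartzMap V ℂ, ∫⁻ x, ‖ψ x‖ₑ ^ 2 = ENNReal.ofReal (∫ x, ‖ψ x‖ ^ 2) := by
    intro ψ
    rw [ofReal_integral_eq_lintegral_ofReal]
    · congr 1; ext x
      rw [ENNReal.ofReal_pow (norm_nonneg _), ofReal_norm]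
    · have := (ψ.memLp 2).integrable_norm_pow (by norm_num)
      simpa using this
    · filter_upwards with x; positivity
  simp_rw [h1]
  have hne : (2 * π)⁻¹ ≠ 0 := by positivity
  have hm := lintegral_map_equiv (μ := volume) (fun v : V => ‖FourierTransform.fourier φ v‖ₑ ^ 2)
    (Homeomorph.smulOfNeZero _ hne).toMeasurableEquiv
  simp only [Homeomorph.toMeasurableEquiv_coe, Homeomorph.smulOfNeZero_apply] at hm
  rw [← hm]
  have h3 := Measure.map_addHaar_smul (volume : Measure V) hne
  change ∫⁻ v, _ ∂(Measure.map (fun v : V => (2 * π)⁻¹ • v) volume) = _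
  erw [h3]
  rw [lintegral_smul_measure, h2, h2, SchwartzMap.integral_norm_sq_fourier, smul_eq_mul, inv_pow,
    inv_inv, abs_of_pos (by positivity)]

theorem exists_volume_eq_smul_map (L : (V × ℝ) ≃L[ℝ] E) :
    ∃ c : NNReal, (volume : Measure E) = c • Measure.map L (volume : Measure (V × ℝ)) := by
  have : (volume : Measure (V × ℝ)).IsAddHaarMeasure := Measure.prod.instIsAddHaarMeasure _ _
  exact ⟨_, Measure.isAddLeftInvariant_eq_smul _ _⟩

theorem exists_trace_majorant (L : (V × ℝ) ≃L[ℝ] E)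
    (hL : ∀ x v s t, ⟪L (x, s), L (v, t)⟫ = ⟪x, v⟫ + s * t) {δ : ℝ} (hδ : 1 / 2 < δ) :
    ∃ K : ENNReal, K ≠ ⊤ ∧ ∀ f : SchwartzMap E ℂ, ∃ H : V → ENNReal,
      (∀ v t, ‖∫ x, cexp (-I * ((⟪x, L (v, t)⟫ : ℝ) : ℂ)) * f x‖ₑ ^ 2 ≤ H v) ∧
      ∫⁻ v, H v ≤ K * ∫⁻ x, ‖((√(1 + ‖x‖ ^ 2) ^ δ : ℝ) : ℂ) * f x‖ₑ ^ 2 := by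
  have : (volume : Measure (V × ℝ)).IsAddHaarMeasure := Measure.prod.instIsAddHaarMeasure _ _
  obtain ⟨c, hc⟩ := exists_volume_eq_smul_map L
  have hemb : MeasurableEmbedding L := L.toHomeomorph.measurableEmbedding
  set J : ENNReal := ∫⁻ s : ℝ, ENNReal.ofReal ((1 + ‖s‖ ^ 2) ^ (-(2 * δ) / 2))
  have hJ : J ≠ ⊤ := by
    have : Integrable (fun s : ℝ => (1 + ‖s‖ ^ 2) ^ (-(2 * δ) / 2)) volume :=
      integrable_rpow_neg_one_add_norm_sq (by simp; linarith)
    exact this.lintegral_lt_top.ne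
  set P : ENNReal := ENNReal.ofReal ((2 * π) ^ Module.finrank ℝ V)
  have hlin : ∀ F : E → ENNReal, Measurable F →
      ∫⁻ x, F x = c * ∫⁻ z : V × ℝ, F (L z) := by
    intro F hF
    rw [hc, lintegral_smul_measure, lintegral_map hF L.continuous.measurable]
    rfl
  refine ⟨c * (J * P), by finiteness, fun f => ?_⟩
  set G : V → ℝ → ℂ := fun v s => ∫ x : V, cexp (-I * ((⟪x, v⟫ : ℝ) : ℂ)) * f (L (x, s))
  have hfc : Continuous f := f.continuous
  have hGm : StronglyMeasurable fun z : V × ℝ => G z.1 z.2 := by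
    have : Continuous fun q : (V × ℝ) × V =>
        cexp (-I * ((⟪q.2, q.1.1⟫ : ℝ) : ℂ)) * f (L (q.2, q.1.2)) := by fun_prop
    exact this.stronglyMeasurable.integral_prod_right'
  have hGm' : Measurable fun z : V × ℝ => ‖G z.1 z.2‖ₑ := hGm.measurable.enorm
  have hplanch : ∀ s, ∫⁻ v, ‖G v s‖ₑ ^ 2 = P * ∫⁻ x, ‖f (L (x, s))‖ₑ ^ 2 := by
    intro s
    have hg : Function.HasTemperateGrowth fun x : V => (x, s) := by
      convert (ContinuousLinearMap.inl ℝ V ℝ).hasTemperateGrowth.add (.const ((0 : V), s)) using 1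
      ext x <;> simp
    have hg' : AntilipschitzWith 1 fun x : V => (x, s) := fun x y => by simp [Prod.edist_eq]
    exact SchwartzMap.lintegral_enorm_sq_fourier_angular
      (SchwartzMap.compCLMOfAntilipschitz ℂ hg hg'
        (SchwartzMap.compCLMOfContinuousLinearEquiv ℂ L f))
  refine ⟨fun v => c ^ 2 * (J * ∫⁻ s, ENNReal.ofReal ((1 + ‖s‖ ^ 2) ^ δ) * ‖G v s‖ₑ ^ 2),
    fun v t => ?_, ?_⟩
  · have hint : Integrable fun z : V × ℝ =>
        cexp (-I * ((⟪z.1, v⟫ + z.2 * t : ℝ) : ℂ)) * f (L z) := by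
      have h0 := (SchwartzMap.compCLMOfContinuousLinearEquiv ℂ L f).integrable
        (μ := (volume : Measure (V × ℝ)))
      refine h0.mono (Continuous.aestronglyMeasurable (by fun_prop)) ?_
      filter_upwards with z
      rw [norm_mul, norm_cexp_neg_I_mul_ofReal]
      simp
    have h1 : ∫ x, cexp (-I * ((⟪x, L (v, t)⟫ : ℝ) : ℂ)) * f x =
        (c : ℝ) • ∫ s, cexp (-I * ((s * t : ℝ) : ℂ)) * G v s := by
      rw [hc, integral_smul_nnreal_measure,
        hemb.integral_map]
      rw [NNReal.smul_def]
      congr 1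
      have h2 : ∀ z : V × ℝ, cexp (-I * ((⟪L z, L (v, t)⟫ : ℝ) : ℂ)) * f (L z) =
          cexp (-I * ((⟪z.1, v⟫ + z.2 * t : ℝ) : ℂ)) * f (L z) := fun z => by
        rw [← hL]
      change ∫ z : V × ℝ, cexp (-I * ((⟪L z, L (v, t)⟫ : ℝ) : ℂ)) * f (L z) = _
      simp_rw [h2]
      rw [Measure.volume_eq_prod, integral_prod_symm _ hint]
      congr 1
      ext s
      rw [← integral_const_mul]
      congr 1
      ext x
      rw [← mul_assoc, ← Complex.exp_add]
      push_cast
      ring_nf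
    calc _ = (c * ‖∫ s, cexp (-I * ((s * t : ℝ) : ℂ)) * G v s‖ₑ) ^ 2 := by
          rw [h1, enorm_smul]; simp
      _ ≤ (c * ∫⁻ s, ‖G v s‖ₑ) ^ 2 := by
          gcongr
          refine (enorm_integral_le_lintegral_enorm _).trans_eq ?_
          congr 1; ext s
          rw [enorm_mul, ← ofReal_norm (cexp _), norm_cexp_neg_I_mul_ofReal, ENNReal.ofReal_one,
            one_mul]
      _ = c ^ 2 * (∫⁻ s, ‖G v s‖ₑ) ^ 2 := mul_pow _ _ _
      _ ≤ _ := by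
          have hGv : Measurable fun s => ‖G v s‖ₑ := by
            clear_value G J P
            fun_prop
          exact mul_le_mul_right (sq_lintegral_le_japanese hGv) _
  · have hsm : Measurable fun z : V × ℝ => ENNReal.ofReal ((1 + ‖z.2‖ ^ 2) ^ δ) *
        ‖G z.1 z.2‖ₑ ^ 2 := by fun_prop
    have hfm : Measurable fun z : V × ℝ => ENNReal.ofReal ((1 + ‖z.2‖ ^ 2) ^ δ) *
        ‖f (L z)‖ₑ ^ 2 := by
      have hfL : Measurable fun z => ‖f (L z)‖ₑ := (hfc.comp L.continuous).measurable.enorm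
      have hw : Measurable fun z : V × ℝ => ENNReal.ofReal ((1 + ‖z.2‖ ^ 2) ^ δ) := by fun_prop
      exact hw.mul (hfL.pow_const 2)
    rw [lintegral_const_mul' _ _ (by finiteness), lintegral_const_mul' _ _ hJ,
      lintegral_lintegral_swap hsm.aemeasurable]
    simp_rw [lintegral_const_mul' _ _ ENNReal.ofReal_ne_top, hplanch, mul_left_comm _ P]
    rw [lintegral_const_mul' _ _ ENNReal.ofReal_ne_top, hlin _ (by fun_prop)]
    simp_rw [← lintegral_const_mul' (ENNReal.ofReal ((1 + _) ^ δ)) _ ENNReal.ofReal_ne_top]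
    rw [lintegral_lintegral_swap (by exact (hfm.comp measurable_swap).aemeasurable),
      lintegral_lintegral hfm.aemeasurable]
    calc _ = c * (J * P) * (c * ∫⁻ z : V × ℝ, ENNReal.ofReal ((1 + ‖z.2‖ ^ 2) ^ δ) *
        ‖f (L z)‖ₑ ^ 2) := by rw [Measure.volume_eq_prod]; ring
      _ ≤ _ := by
        gcongr with z
        rw [enorm_mul, mul_pow]
        gcongr
        rw [← ofReal_norm, ← ENNReal.ofReal_pow (norm_nonneg _)]
        apply ENNReal.ofReal_le_ofReal
        have hn : ‖L z‖ ^ 2 = ‖z.1‖ ^ 2 + z.2 ^ 2 := by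
          rw [← real_inner_self_eq_norm_sq, ← real_inner_self_eq_norm_sq, sq z.2, ← hL]
        have h0 : (0 : ℝ) ≤ 1 + ‖L z‖ ^ 2 := by positivity
        have hsq : ‖((√(1 + ‖L z‖ ^ 2) ^ δ : ℝ) : ℂ)‖ ^ 2 = (1 + ‖L z‖ ^ 2) ^ δ := by
          rw [Complex.norm_real, Real.norm_of_nonneg (Real.rpow_nonneg (Real.sqrt_nonneg _) _),
            ← Real.rpow_natCast, ← Real.rpow_mul (Real.sqrt_nonneg _), mul_comm δ,
            Real.rpow_mul (Real.sqrt_nonneg _), Real.rpow_natCast, Real.sq_sqrt h0]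
        rw [hsq, hn, Real.norm_eq_abs, sq_abs]
        refine Real.rpow_le_rpow (by positivity) ?_ (by linarith)
        nlinarith [sq_nonneg ‖z.1‖]

/-- On a convex set where `p` increases in the direction `L (0, 1)`, integrating along this
direction first turns the Poisson kernel of `p` into a kernel of mass at most `π`. -/
theorem exists_lintegral_poisson_mul_fourier_le (L : (V × ℝ) ≃L[ℝ] E)
    (hL : ∀ x v s t, ⟪L (x, s), L (v, t)⟫ = ⟪x, v⟫ + s * t) {δ : ℝ} (hδ : 1 / 2 < δ)
    {U : Set E} (hU : Convex ℝ U) (hUm : MeasurableSet U) {p : E → ℝ} (hp : Measurable p) {B : ℝ}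
    (hB : 0 ≤ B) (hdiff : ∀ ξ ∈ U, DifferentiableAt ℝ p ξ)
    (hpos : ∀ ξ ∈ U, 0 < fderiv ℝ p ξ (L (0, 1)))
    (hbound : ∀ ξ ∈ U, ‖fderiv ℝ p ξ‖ ≤ B * fderiv ℝ p ξ (L (0, 1))) :
    ∃ K : ENNReal, K ≠ ⊤ ∧ ∀ lam η : ℝ, 0 < η → ∀ f : SchwartzMap E ℂ,
      ∫⁻ ξ in U, ENNReal.ofReal (η * ‖fderiv ℝ p ξ‖ / ((lam - p ξ) ^ 2 + η ^ 2)) *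
          ‖∫ x, cexp (-I * ((⟪x, ξ⟫ : ℝ) : ℂ)) * f x‖ₑ ^ 2 ≤
        K * ∫⁻ x, ‖((√(1 + ‖x‖ ^ 2) ^ δ : ℝ) : ℂ) * f x‖ₑ ^ 2 := by
  obtain ⟨c, hc⟩ := exists_volume_eq_smul_map L
  have hlin : ∀ F : E → ENNReal, ∫⁻ x, F x = c * ∫⁻ z : V × ℝ, F (L z) := by
    intro F
    have hemb : MeasurableEmbedding L := L.toHomeomorph.measurableEmbedding
    rw [hc, lintegral_smul_measure, hemb.lintegral_map]
    rfl
  obtain ⟨K, hK, hH⟩ := exists_trace_majorant L hL hδ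
  refine ⟨c * (ENNReal.ofReal B * ENNReal.ofReal π * K), by finiteness, fun lam η hη f => ?_⟩
  obtain ⟨H, hle, hint⟩ := hH f
  set W : E → ENNReal := fun ξ =>
    ENNReal.ofReal (η * ‖fderiv ℝ p ξ‖ / ((lam - p ξ) ^ 2 + η ^ 2)) with hW
  have hWm : Measurable W := by
    have := measurable_fderiv ℝ p
    fun_prop
  have hline : ∀ v t, L (v, t) = L (v, 0) + t • L (0, 1) := fun v t => by
    rw [← map_smul, ← map_add]; simp
  have hfiber : ∀ v, ∫⁻ t in {t | L (v, t) ∈ U}, W (L (v, t)) ≤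
      ENNReal.ofReal B * ENNReal.ofReal π := by
    intro v
    have hSm : MeasurableSet {t : ℝ | L (v, t) ∈ U} :=
      (show Continuous fun t : ℝ => L (v, t) by fun_prop).measurable hUm
    have hS : Convex ℝ {t : ℝ | L (v, t) ∈ U} := by
      intro s hs t ht α β hα hβ hαβ
      have := hU hs ht hα hβ hαβ
      rw [← map_smul, ← map_smul, ← map_add] at this
      simpa [← add_smul, hαβ] using this
    have hd : ∀ t ∈ {t : ℝ | L (v, t) ∈ U},
        HasDerivAt (fun t => p (L (v, t))) (fderiv ℝ p (L (v, t)) (L (0, 1))) t := by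
      intro t ht
      have h1 : HasDerivAt (fun t : ℝ => L (v, t)) (L (0, 1)) t := by
        rw [funext (hline v)]
        simpa using ((hasDerivAt_id t).smul_const (L (0, 1))).const_add (L (v, 0))
      exact (hdiff _ ht).hasFDerivAt.comp_hasDerivAt t h1
    calc _ ≤ ∫⁻ t in {t | L (v, t) ∈ U}, ENNReal.ofReal B * ENNReal.ofReal
          (η * fderiv ℝ p (L (v, t)) (L (0, 1)) / ((lam - p (L (v, t))) ^ 2 + η ^ 2)) := by
          refine setLIntegral_mono' hSm fun t ht => ?_
          rw [← ENNReal.ofReal_mul hB]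
          apply ENNReal.ofReal_le_ofReal
          rw [← mul_div_assoc, mul_left_comm]
          gcongr
          exact hbound _ ht
      _ ≤ _ := by
          rw [lintegral_const_mul' _ _ ENNReal.ofReal_ne_top]
          gcongr
          exact lintegral_poisson_deriv_le hS hSm hd (fun t ht => hpos _ ht) lam hη
  calc _ = c * ∫⁻ z : V × ℝ, U.indicator (fun ξ => W ξ *
        ‖∫ x, cexp (-I * ((⟪x, ξ⟫ : ℝ) : ℂ)) * f x‖ₑ ^ 2) (L z) := by
        rw [← lintegral_indicator hUm, hlin]
    _ ≤ c * ∫⁻ v, ∫⁻ t, U.indicator (fun ξ => W ξ *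
        ‖∫ x, cexp (-I * ((⟪x, ξ⟫ : ℝ) : ℂ)) * f x‖ₑ ^ 2) (L (v, t)) := by
        gcongr
        exact lintegral_prod_le _
    _ ≤ c * ∫⁻ v, (ENNReal.ofReal B * ENNReal.ofReal π) * H v := by
        gcongr with v
        have hSm : MeasurableSet {t : ℝ | L (v, t) ∈ U} :=
          (show Continuous fun t : ℝ => L (v, t) by fun_prop).measurable hUm
        calc _ ≤ ∫⁻ t, {t : ℝ | L (v, t) ∈ U}.indicator (fun t => W (L (v, t)) * H v) t := by
              gcongr with t
              by_cases h : L (v, t) ∈ U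
              · rw [Set.indicator_of_mem h, Set.indicator_of_mem (by exact h)]
                gcongr
                exact hle v t
              · simp [h]
          _ = (∫⁻ t in {t | L (v, t) ∈ U}, W (L (v, t))) * H v := by
              rw [lintegral_indicator hSm, lintegral_mul_const]
              exact hWm.comp (show Continuous fun t : ℝ => L (v, t) by fun_prop).measurable
          _ ≤ _ := by
              gcongr
              exact hfiber v
    _ ≤ _ := by
        rw [lintegral_const_mul' _ _ (by finiteness), mul_assoc (c : ENNReal), mul_assoc _ K]
        gcongr

/-- The Poisson kernel of `a ^ m` tested against the squared Fourier transform is bounded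
uniformly in the centre and the width of the kernel. -/
theorem exists_lintegral_poisson_homogeneous_le {d : ℕ} (hd : Module.finrank ℝ E = d + 1)
    {m : ℝ} (hm : 0 < m) {δ : ℝ} (hδ : 1 / 2 < δ) {a : E → ℝ} (ha_cont : Continuous a)
    (ha_smooth : ContDiffOn ℝ (⊤ : ℕ∞) a {(0 : E)}ᶜ)
    (ha_hom : ∀ t : ℝ, 0 < t → ∀ ξ, a (t • ξ) = t * a ξ)
    (ha_pos : ∀ ξ : E, ξ ≠ 0 → 0 < a ξ) :
    ∃ K : ENNReal, K ≠ ⊤ ∧ ∀ lam η : ℝ, 0 < η → ∀ f : SchwartzMap E ℂ,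
      ∫⁻ ξ, ENNReal.ofReal (η * ‖fderiv ℝ (fun ζ => a ζ ^ m) ξ‖ / ((lam - a ξ ^ m) ^ 2 + η ^ 2)) *
          ‖∫ x, cexp (-I * ((⟪x, ξ⟫ : ℝ) : ℂ)) * f x‖ₑ ^ 2 ≤
        K * ∫⁻ x, ‖((√(1 + ‖x‖ ^ 2) ^ δ : ℝ) : ℂ) * f x‖ₑ ^ 2 := by
  have hdiff : ∀ ξ : E, ξ ≠ 0 → DifferentiableAt ℝ a ξ := fun ξ hξ =>
    (ha_smooth.contDiffAt (isOpen_compl_singleton.mem_nhds hξ)).differentiableAt (by simp)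
  have hderiv : ∀ ξ : E, ξ ≠ 0 → HasFDerivAt (fun ζ => a ζ ^ m)
      ((m * a ξ ^ (m - 1)) • fderiv ℝ a ξ) ξ := fun ξ hξ =>
    (hdiff ξ hξ).hasFDerivAt.rpow_const (Or.inl (ha_pos ξ hξ).ne')
  have hp : Measurable fun ζ => a ζ ^ m := ha_cont.measurable.pow_const m
  obtain ⟨M, hM0, hM⟩ := exists_fderiv_bound_of_homogeneous ha_smooth ha_hom
  have hcone : ∀ ω : Metric.sphere (0 : E) 1, ∃ c : ℝ, c < 1 ∧ ∃ K : ENNReal, K ≠ ⊤ ∧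
      ∀ lam η : ℝ, 0 < η → ∀ f : SchwartzMap E ℂ,
      ∫⁻ ξ in {ξ : E | c * ‖ξ‖ < ⟪(ω : E), ξ⟫},
          ENNReal.ofReal (η * ‖fderiv ℝ (fun ζ => a ζ ^ m) ξ‖ / ((lam - a ξ ^ m) ^ 2 + η ^ 2)) *
          ‖∫ x, cexp (-I * ((⟪x, ξ⟫ : ℝ) : ℂ)) * f x‖ₑ ^ 2 ≤
        K * ∫⁻ x, ‖((√(1 + ‖x‖ ^ 2) ^ δ : ℝ) : ℂ) * f x‖ₑ ^ 2 := by
    rintro ⟨ω, hω⟩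
    rw [mem_sphere_zero_iff_norm] at hω
    obtain ⟨c, κ, hc0, hc1, hκ, hlow⟩ :=
      exists_circular_cone_fderiv_lower_bound ha_smooth ha_hom ha_pos hω
    obtain ⟨L, hL, rfl⟩ := exists_orthogonal_coordinates hd hω
    have hne : ∀ ξ ∈ {ξ : E | c * ‖ξ‖ < ⟪L (0, 1), ξ⟫}, ξ ≠ 0 := by
      rintro ξ hξ rfl
      simp at hξ
    have hcoef : ∀ ξ : E, ξ ≠ 0 → 0 < m * a ξ ^ (m - 1) := fun ξ hξ =>
      mul_pos hm (Real.rpow_pos_of_pos (ha_pos ξ hξ) _)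
    refine ⟨c, hc1, exists_lintegral_poisson_mul_fourier_le L hL hδ
      (convex_circular_cone _ hc0)
      (isOpen_lt (by fun_prop) (by fun_prop)).measurableSet hp (B := M / κ) (by positivity)
      (fun ξ hξ => (hderiv ξ (hne ξ hξ)).differentiableAt) (fun ξ hξ => ?_) fun ξ hξ => ?_⟩
    · rw [(hderiv ξ (hne ξ hξ)).fderiv]
      exact mul_pos (hcoef ξ (hne ξ hξ)) (hκ.trans_le (hlow ξ hξ))
    · rw [(hderiv ξ (hne ξ hξ)).fderiv, norm_smul, Real.norm_of_nonneg (hcoef ξ (hne ξ hξ)).le,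
        _root_.smul_apply, smul_eq_mul, mul_left_comm]
      refine mul_le_mul_of_nonneg_left ?_ (hcoef ξ (hne ξ hξ)).le
      calc ‖fderiv ℝ a ξ‖ ≤ M := hM ξ (hne ξ hξ)
        _ = M / κ * κ := by field_simp
        _ ≤ _ := by
          gcongr
          exact hlow ξ hξ
  choose c hc1 K hK hKle using hcone
  obtain ⟨t, ht⟩ := (isCompact_sphere (0 : E) 1).elim_finite_subcover
    (fun ω : Metric.sphere (0 : E) 1 => {ξ : E | c ω * ‖ξ‖ < ⟪(ω : E), ξ⟫})
    (fun ω => isOpen_lt (by fun_prop) (by fun_prop)) fun ω hω => by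
      refine Set.mem_iUnion.2 ⟨⟨ω, hω⟩, ?_⟩
      rw [mem_sphere_zero_iff_norm] at hω
      simp [hω, hc1]
  have hcover : ({0}ᶜ : Set E) ⊆
      ⋃ ω : t, {ξ : E | c ω * ‖ξ‖ < ⟪((ω : Metric.sphere (0 : E) 1) : E), ξ⟫} := by
    intro ξ hξ
    have hn : 0 < ‖ξ‖ := norm_pos_iff.2 hξ
    have hs : ‖ξ‖⁻¹ • ξ ∈ Metric.sphere (0 : E) 1 := by
      rw [mem_sphere_zero_iff_norm, norm_smul, norm_inv, norm_norm, inv_mul_cancel₀ hn.ne']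
    have hs' := ht hs
    simp only [Set.mem_iUnion] at hs'
    obtain ⟨ω, hωt, hω⟩ := hs'
    refine Set.mem_iUnion.2 ⟨⟨ω, hωt⟩, ?_⟩
    simp only [Set.mem_ofPred_eq] at hω ⊢
    rw [norm_smul, norm_inv, norm_norm, inv_mul_cancel₀ hn.ne', inner_smul_right, mul_one,
      inv_mul_eq_div, lt_div_iff₀ hn] at hω
    exact hω
  have : Nontrivial E := Module.nontrivial_of_finrank_pos (R := ℝ) (by omega)
  refine ⟨∑ ω : t, K ω, ENNReal.sum_ne_top.2 fun ω _ => hK ω, fun lam η hη f => ?_⟩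
  have hnull : ({0}ᶜ : Set E) =ᵐ[volume] Set.univ := by
    simp
  rw [← setLIntegral_univ, ← setLIntegral_congr hnull]
  refine (lintegral_mono_set hcover).trans ((lintegral_iUnion_le _ _).trans ?_)
  rw [tsum_fintype, Finset.sum_mul]
  exact Finset.sum_le_sum fun ω _ => hKle ω lam η hη f

theorem SchwartzMap.memLp_two_japanese_mul (δ : ℝ) (f : SchwartzMap E ℂ) :
    MemLp (fun x => ((√(1 + ‖x‖ ^ 2) ^ δ : ℝ) : ℂ) * f x) 2 volume := by
  have h := (SchwartzMap.smulLeftCLM ℂ (fun x : E => (1 + ‖x‖ ^ 2) ^ (δ / 2)) f).memLp 2 volume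
  convert h using 2 with x
  rw [SchwartzMap.smulLeftCLM_apply_apply
    (Function.hasTemperateGrowth_one_add_norm_sq_rpow E (δ / 2)), Real.sqrt_eq_rpow,
    ← Real.rpow_mul (by positivity), Complex.real_smul]
  ring_nf

end Trace

theorem abs_im_integral_le_toReal {α : Type*} [MeasurableSpace α] {μ : Measure α} (g : α → ℂ)
    (hfin : ∫⁻ x, ‖(g x).im‖ₑ ∂μ ≠ ⊤) :
    |(∫ x, g x ∂μ).im| ≤ (∫⁻ x, ‖(g x).im‖ₑ ∂μ).toReal := by
  by_cases hg : Integrable g μ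
  · have h : (∫ x, g x ∂μ).im = ∫ x, (g x).im ∂μ := (Complex.imCLM.integral_comp_comm hg).symm
    rw [h, ← Real.norm_eq_abs, ← toReal_enorm]
    exact ENNReal.toReal_mono hfin (enorm_integral_le_lintegral_enorm _)
  · simp [integral_undef hg]

theorem integral_IFT_mul_conj {n : ℕ} {F f : EuclideanSpace ℝ (Fin n) → ℂ} (hF : Integrable F)
    (hf : Integrable f) :
    ∫ x, IFT n F x * (starRingEnd ℂ) (f x) = ∫ ξ, F ξ * (starRingEnd ℂ) (FT n f ξ) := by
  have hf' : Integrable fun x => (starRingEnd ℂ) (f x) := by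
    simpa using Complex.conjCLE.toContinuousLinearMap.integrable_comp hf
  have hcont : Continuous fun z : EuclideanSpace ℝ (Fin n) × EuclideanSpace ℝ (Fin n) =>
      cexp (I * ((⟪z.1, z.2⟫ : ℝ) : ℂ)) := by fun_prop
  have hprod : Integrable fun z : EuclideanSpace ℝ (Fin n) × EuclideanSpace ℝ (Fin n) =>
      cexp (I * ((⟪z.1, z.2⟫ : ℝ) : ℂ)) * ((starRingEnd ℂ) (f z.1) * F z.2) := by
    have h0 := hf'.mul_prod hF
    refine h0.mono (hcont.aestronglyMeasurable.mul h0.aestronglyMeasurable) ?_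
    filter_upwards with z
    rw [norm_mul, Complex.norm_exp_I_mul_ofReal, one_mul]
  have h1 : ∀ x, IFT n F x * (starRingEnd ℂ) (f x) = ((2 * π) ^ (-(n : ℝ) / 2) : ℝ) •
      ∫ ξ, cexp (I * ((⟪x, ξ⟫ : ℝ) : ℂ)) * ((starRingEnd ℂ) (f x) * F ξ) := by
    intro x
    rw [IFT, smul_mul_assoc, ← integral_mul_const]
    congr 2
    ext ξ
    ring
  have h2 : ∀ ξ, F ξ * (starRingEnd ℂ) (FT n f ξ) = ((2 * π) ^ (-(n : ℝ) / 2) : ℝ) •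
      ∫ x, cexp (I * ((⟪x, ξ⟫ : ℝ) : ℂ)) * ((starRingEnd ℂ) (f x) * F ξ) := by
    intro ξ
    rw [FT, Complex.real_smul, map_mul, Complex.conj_ofReal, ← integral_conj, mul_left_comm,
      ← integral_const_mul, Complex.real_smul]
    congr 2
    ext x
    rw [map_mul, ← Complex.exp_conj]
    simp only [map_mul, map_neg, Complex.conj_I, Complex.conj_ofReal, neg_neg]
    ring
  simp_rw [h1, h2, integral_smul]
  congr 1
  exact integral_integral_swap hprod

theorem IFT_eq_zero_of_not_integrable {n : ℕ} {F : EuclideanSpace ℝ (Fin n) → ℂ}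
    (hF : ¬ Integrable F) (x : EuclideanSpace ℝ (Fin n)) : IFT n F x = 0 := by
  rw [IFT, integral_undef, smul_zero]
  contrapose hF
  have hcont : Continuous fun ξ : EuclideanSpace ℝ (Fin n) =>
      cexp (-I * ((⟪x, ξ⟫ : ℝ) : ℂ)) := by fun_prop
  have h : F = fun ξ => cexp (-I * ((⟪x, ξ⟫ : ℝ) : ℂ)) *
      (cexp (I * ((⟪x, ξ⟫ : ℝ) : ℂ)) * F ξ) := by
    ext ξ
    rw [← mul_assoc, ← Complex.exp_add]
    simp
  rw [h]
  refine hF.mono (hcont.aestronglyMeasurable.mul hF.aestronglyMeasurable) ?_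
  filter_upwards with ξ
  rw [norm_mul, norm_cexp_neg_I_mul_ofReal, one_mul]

theorem im_ofReal_mul_inv_resolvent (A lam η ε p : ℝ) (hε : ε = 1 ∨ ε = -1) :
    ((A : ℂ) * (((lam : ℂ) + (ε : ℂ) * (η : ℂ) * I) - (p : ℂ))⁻¹).im =
      -ε * (η * A / ((lam - p) ^ 2 + η ^ 2)) := by
  have hε2 : ε * ε = 1 := by rcases hε with rfl | rfl <;> norm_num
  have hre : (((lam : ℂ) + (ε : ℂ) * (η : ℂ) * I) - (p : ℂ)).re = lam - p := by simp
  have him : (((lam : ℂ) + (ε : ℂ) * (η : ℂ) * I) - (p : ℂ)).im = ε * η := by simp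
  rw [Complex.im_ofReal_mul, Complex.inv_im, Complex.normSq_apply, hre, him]
  rw [show ε * η * (ε * η) = (ε * ε) * η ^ 2 by ring, hε2]
  ring

theorem imaginary_part_resolvent_bound (n : ℕ) (hn : 2 ≤ n) (m : ℝ) (hm : 1 < m)
    (δ : ℝ) (hδ : 1 / 2 < δ)
    (a : EuclideanSpace ℝ (Fin n) → ℝ)
    (ha_cont : Continuous a)
    (ha_smooth : ContDiffOn ℝ (⊤ : ℕ∞) a {(0 : EuclideanSpace ℝ (Fin n))}ᶜ)
    (ha_hom : ∀ t : ℝ, 0 < t → ∀ ξ, a (t • ξ) = t * a ξ)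
    (ha_pos : ∀ ξ : EuclideanSpace ℝ (Fin n), ξ ≠ 0 → 0 < a ξ) :
    ∃ C > 0, ∀ lam η : ℝ, 0 < η → ∀ ε : ℝ, ε = 1 ∨ ε = -1 →
      ∀ f : SchwartzMap (EuclideanSpace ℝ (Fin n)) ℂ,
      |(∫ x : EuclideanSpace ℝ (Fin n),
          mult n (fun ξ =>
              ((‖fderiv ℝ (fun ζ' : EuclideanSpace ℝ (Fin n) => a ζ' ^ m) ξ‖ : ℝ) : ℂ) *
                (((lam : ℂ) + (ε : ℂ) * (η : ℂ) * Complex.I) - ((a ξ ^ m : ℝ) : ℂ))⁻¹)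
            (fun y => f y) x * (starRingEnd ℂ) (f x)).im| ≤
        C * (eLpNorm (fun x => ((Real.sqrt (1 + ‖x‖ ^ 2) ^ (δ) : ℝ) : ℂ) * f x) 2 volume).toReal ^ 2 := by
  obtain ⟨K, hK, hbound⟩ := exists_lintegral_poisson_homogeneous_le (d := n - 1)
    (by rw [finrank_euclideanSpace_fin]; omega) (zero_lt_one.trans hm) hδ ha_cont ha_smooth
    ha_hom ha_pos
  set k : ℝ := (2 * π) ^ (-(n : ℝ) / 2) with hk
  set K' : ENNReal := ENNReal.ofReal (k ^ 2) * K with hK'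
  have hK'fin : K' ≠ ⊤ := by finiteness
  refine ⟨K'.toReal + 1, by positivity, fun lam η hη ε hε f => ?_⟩
  set N := eLpNorm (fun x => ((Real.sqrt (1 + ‖x‖ ^ 2) ^ (δ) : ℝ) : ℂ) * f x) 2 volume with hN
  have hNfin : N ≠ ⊤ := (f.memLp_two_japanese_mul δ).eLpNorm_ne_top
  have hNsq : ∫⁻ x, ‖((√(1 + ‖x‖ ^ 2) ^ δ : ℝ) : ℂ) * f x‖ₑ ^ 2 = N ^ 2 := by
    have := eLpNorm_nnreal_pow_eq_lintegral (μ := (volume : Measure (EuclideanSpace ℝ (Fin n))))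
      (f := fun x => ((Real.sqrt (1 + ‖x‖ ^ 2) ^ (δ) : ℝ) : ℂ) * f x) (p := 2) two_ne_zero
    simpa using this.symm
  by_cases hint : Integrable fun ξ =>
      (((‖fderiv ℝ (fun ζ' : EuclideanSpace ℝ (Fin n) => a ζ' ^ m) ξ‖ : ℝ) : ℂ) *
        (((lam : ℂ) + (ε : ℂ) * (η : ℂ) * Complex.I) - ((a ξ ^ m : ℝ) : ℂ))⁻¹) *
        FT n (fun y => f y) ξ
  swap
  · simp only [mult, IFT_eq_zero_of_not_integrable hint, zero_mul, integral_zero,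
      Complex.zero_im, abs_zero]
    positivity
  have him : ∀ ξ, ‖(((((‖fderiv ℝ (fun ζ' : EuclideanSpace ℝ (Fin n) => a ζ' ^ m) ξ‖ : ℝ) : ℂ) *
        (((lam : ℂ) + (ε : ℂ) * (η : ℂ) * Complex.I) - ((a ξ ^ m : ℝ) : ℂ))⁻¹) *
        FT n (fun y => f y) ξ) * (starRingEnd ℂ) (FT n (fun y => f y) ξ)).im‖ₑ =
      ENNReal.ofReal (k ^ 2) * (ENNReal.ofReal (η * ‖fderiv ℝ (fun ζ => a ζ ^ m) ξ‖ /
        ((lam - a ξ ^ m) ^ 2 + η ^ 2)) * ‖∫ x, cexp (-I * ((⟪x, ξ⟫ : ℝ) : ℂ)) * f x‖ₑ ^ 2) := by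
    intro ξ
    have hε1 : |ε| = 1 := by rcases hε with rfl | rfl <;> simp
    rw [mul_assoc _ (FT n _ ξ), Complex.mul_conj, Complex.im_mul_ofReal,
      im_ofReal_mul_inv_resolvent _ _ _ _ _ hε, Complex.normSq_eq_norm_sq, FT, norm_smul,
      ← hk, ← ofReal_norm, ← ofReal_norm, ← ENNReal.ofReal_pow (norm_nonneg _),
      ← ENNReal.ofReal_mul (by positivity), ← ENNReal.ofReal_mul (by positivity)]
    congr 1
    rw [norm_mul, norm_mul, norm_neg, Real.norm_eq_abs ε, hε1, Real.norm_of_nonneg (by positivity),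
      Real.norm_of_nonneg (by positivity), mul_pow, Real.norm_eq_abs k, sq_abs]
    ring
  have hle := hbound lam η hη f
  rw [hNsq] at hle
  have htotal : ∫⁻ ξ, ‖(((((‖fderiv ℝ (fun ζ' : EuclideanSpace ℝ (Fin n) => a ζ' ^ m) ξ‖ : ℝ) : ℂ) *
        (((lam : ℂ) + (ε : ℂ) * (η : ℂ) * Complex.I) - ((a ξ ^ m : ℝ) : ℂ))⁻¹) *
        FT n (fun y => f y) ξ) * (starRingEnd ℂ) (FT n (fun y => f y) ξ)).im‖ₑ ≤ K' * N ^ 2 := by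
    simp_rw [him]
    rw [lintegral_const_mul' _ _ ENNReal.ofReal_ne_top, hK', mul_assoc]
    gcongr
  have hfin : K' * N ^ 2 ≠ ⊤ := by finiteness
  simp only [mult]
  rw [integral_IFT_mul_conj hint f.integrable]
  calc _ ≤ _ := abs_im_integral_le_toReal _ (ne_top_of_le_ne_top hfin htotal)
    _ ≤ (K' * N ^ 2).toReal := ENNReal.toReal_mono hfin htotal
    _ = K'.toReal * N.toReal ^ 2 := by rw [ENNReal.toReal_mul, ENNReal.toReal_pow]
    _ ≤ _ := by gcongr; linarith
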